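/- arXiv:0812.0927 — 4 statements merged into one kernel-verified Lean document; each statement's English description precedes it below -/
import Mathlib

section
/- Let N ≥ 3, 1 < p < N, p* = Np/(N−p), and let Ω ⊂ ℝᴺ be a measurable set of finite Lebesgue measure. Let f : ℝ → ℝ be continuous with f(u) = o(|u|^{p*−1}) as |u| → ∞. Let (vₙ) be a sequence of measurable functions on Ω such that sup_n ∫_Ω |vₙ|^{p*} dx < ∞ and ∫_Ω |vₙ| dx → 0. Then ∫_Ω f(vₙ(x)) vₙ(x) dx → 0 as n → ∞. -/
open Filter MeasureTheory

open scoped Asymptotics ENNReal NNReal Topology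

/-!
Growth of order `o(‖u‖ ^ (s - 1))` at infinity together with boundedness on compact sets gives, for
every `ε > 0`, a constant `C` with `‖f u‖ * ‖u‖ ≤ ε * ‖u‖ ^ s + C * ‖u‖` for all `u`. After
composing with `vₙ` and integrating, the first term is at most `ε` times the uniform bound on
`∫ ‖vₙ‖ ^ s`, and the second one vanishes in the limit by convergence in `L¹`.
-/

section Growth

variable {E F : Type*} [SeminormedAddCommGroup F]

lemma exists_norm_le_mul_norm_add_of_isLittleO_cocompact {X G : Type*} [TopologicalSpace X]
    [SeminormedAddCommGroup G] {f : X → F} {g : X → G} (hf : Continuous f)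
    (hfg : f =o[cocompact X] g) {ε : ℝ≥0} (hε : 0 < ε) :
    ∃ C : ℝ≥0, ∀ x, ‖f x‖ ≤ ε * ‖g x‖ + C := by
  obtain ⟨K, hK, hKfg⟩ := mem_cocompact.1 (hfg.def (NNReal.coe_pos.2 hε))
  obtain ⟨C, hC⟩ := hK.exists_bound_of_continuousOn hf.continuousOn
  refine ⟨C.toNNReal, fun x => ?_⟩
  by_cases hx : x ∈ K
  · exact (hC x hx).trans <| (Real.le_coe_toNNReal C).trans <|
      le_add_of_nonneg_left (by positivity)
  · exact (hKfg hx).trans <| le_add_of_nonneg_right (by positivity)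

lemma exists_norm_mul_norm_le_of_isLittleO_rpow [SeminormedAddCommGroup E] {f : E → F} {s : ℝ}
    (hf : Continuous f) (hgrowth : f =o[cocompact E] fun u => ‖u‖ ^ (s - 1))
    {ε : ℝ≥0} (hε : 0 < ε) :
    ∃ C : ℝ≥0, ∀ u, ‖f u‖ * ‖u‖ ≤ ε * ‖u‖ ^ s + C * ‖u‖ := by
  obtain ⟨C, hC⟩ := exists_norm_le_mul_norm_add_of_isLittleO_cocompact hf hgrowth hε
  refine ⟨C, fun u => ?_⟩
  rcases eq_or_ne ‖u‖ 0 with hu | hu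
  · simp only [hu, mul_zero]
    positivity
  calc ‖f u‖ * ‖u‖ ≤ (ε * ‖u‖ ^ (s - 1) + C) * ‖u‖ := by
        gcongr
        simpa only [Real.norm_of_nonneg (Real.rpow_nonneg (norm_nonneg u) _)] using hC u
    _ = ε * ‖u‖ ^ s + C * ‖u‖ := by
        rw [Real.rpow_sub_one hu]
        field_simp

lemma isLittleO_norm_rpow_cocompact_iff [NormedAddCommGroup E] {f : E → ℝ} {r : ℝ} :
    (f =o[cocompact E] fun u => ‖u‖ ^ r) ↔
      Tendsto (fun u => f u / ‖u‖ ^ r) (cocompact E) (𝓝 0) := by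
  refine Asymptotics.isLittleO_iff_tendsto' ?_
  filter_upwards [(isCompact_singleton (x := (0 : E))).compl_mem_cocompact] with u hu hzero
  exact absurd hzero (Real.rpow_pos_of_pos (norm_pos_iff.2 hu) r).ne'

end Growth

section Limits

variable {ι : Type*} {l : Filter ι}

lemma tendsto_zero_of_forall_exists_le_mul_add_mul {x a b : ι → ℝ≥0∞} {M : ℝ≥0∞} (hM : M ≠ ∞)
    (ha : ∀ᶠ i in l, a i ≤ M) (hb : Tendsto b l (𝓝 0))
    (h : ∀ ε : ℝ≥0, 0 < ε → ∃ C : ℝ≥0, ∀ᶠ i in l, x i ≤ ε * a i + C * b i) :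
    Tendsto x l (𝓝 0) := by
  refine ENNReal.tendsto_nhds_zero.2 fun δ hδ => ?_
  have hδ2 : δ / 2 ≠ 0 := (ENNReal.half_pos hδ.ne').ne'
  obtain ⟨ε, hε, hεM⟩ := ENNReal.exists_nnreal_pos_mul_lt hM hδ2
  obtain ⟨C, hC⟩ := h ε hε
  have hCb : Tendsto (fun i => C * b i) l (𝓝 0) := by
    simpa only [mul_zero] using ENNReal.Tendsto.const_mul hb (Or.inr ENNReal.coe_ne_top)
  filter_upwards [ha, hC, hCb.eventually_le_const hδ2.bot_lt] with i hai hxi hbi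
  calc x i ≤ ε * a i + C * b i := hxi
    _ ≤ ε * M + δ / 2 := by gcongr
    _ ≤ δ / 2 + δ / 2 := by gcongr
    _ = δ := ENNReal.add_halves δ

variable {α E F : Type*} [MeasurableSpace α] {μ : Measure α}

lemma tendsto_integral_zero_of_tendsto_lintegral_enorm [NormedAddCommGroup E] [NormedSpace ℝ E]
    {g : ι → α → E} (hg : Tendsto (fun i => ∫⁻ x, ‖g i x‖ₑ ∂μ) l (𝓝 0)) :
    Tendsto (fun i => ∫ x, g i x ∂μ) l (𝓝 0) :=
  tendsto_zero_iff_enorm_tendsto_zero.2 <| tendsto_of_tendsto_of_tendsto_of_le_of_le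
    tendsto_const_nhds hg (fun _ => zero_le) fun _ => enorm_integral_le_lintegral_enorm _

lemma lintegral_enorm_comp_mul_enorm_le [SeminormedAddCommGroup E] [SeminormedAddCommGroup F]
    {f : E → F} {s : ℝ} {ε C : ℝ≥0} (hf : ∀ u, ‖f u‖ * ‖u‖ ≤ ε * ‖u‖ ^ s + C * ‖u‖)
    {v : α → E} (hv : AEMeasurable (fun x => ‖v x‖ₑ) μ) :
    ∫⁻ x, ‖f (v x)‖ₑ * ‖v x‖ₑ ∂μ ≤
      ε * ∫⁻ x, ENNReal.ofReal (‖v x‖ ^ s) ∂μ + C * ∫⁻ x, ‖v x‖ₑ ∂μ := by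
  have hpointwise (u : E) :
      ‖f u‖ₑ * ‖u‖ₑ ≤ ε * ENNReal.ofReal (‖u‖ ^ s) + C * ‖u‖ₑ := by
    have := ENNReal.ofReal_le_ofReal (hf u)
    rwa [ENNReal.ofReal_add (by positivity) (by positivity), ENNReal.ofReal_mul (by positivity),
      ENNReal.ofReal_mul (by positivity), ENNReal.ofReal_mul (by positivity),
      ENNReal.ofReal_coe_nnreal, ENNReal.ofReal_coe_nnreal, ofReal_norm, ofReal_norm] at this
  calc ∫⁻ x, ‖f (v x)‖ₑ * ‖v x‖ₑ ∂μ
      ≤ ∫⁻ x, (ε * ENNReal.ofReal (‖v x‖ ^ s) + C * ‖v x‖ₑ) ∂μ :=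
        lintegral_mono fun x => hpointwise (v x)
    _ = ε * ∫⁻ x, ENNReal.ofReal (‖v x‖ ^ s) ∂μ + C * ∫⁻ x, ‖v x‖ₑ ∂μ := by
        rw [lintegral_add_right' _ (hv.const_mul _), lintegral_const_mul' _ _ ENNReal.coe_ne_top,
          lintegral_const_mul' _ _ ENNReal.coe_ne_top]

theorem perturbation_term_vanishes_general [SeminormedAddCommGroup E] [SeminormedAddCommGroup F]
    {f : E → F} {s : ℝ} (hf : Continuous f)
    (hgrowth : f =o[cocompact E] fun u => ‖u‖ ^ (s - 1))
    {v : ι → α → E} (hv : ∀ i, AEMeasurable (fun x => ‖v i x‖ₑ) μ) {M : ℝ≥0∞} (hM : M ≠ ∞)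
    (hbound : ∀ᶠ i in l, ∫⁻ x, ENNReal.ofReal (‖v i x‖ ^ s) ∂μ ≤ M)
    (hL1 : Tendsto (fun i => ∫⁻ x, ‖v i x‖ₑ ∂μ) l (𝓝 0)) :
    Tendsto (fun i => ∫⁻ x, ‖f (v i x)‖ₑ * ‖v i x‖ₑ ∂μ) l (𝓝 0) := by
  refine tendsto_zero_of_forall_exists_le_mul_add_mul hM hbound hL1 fun ε hε => ?_
  obtain ⟨C, hC⟩ := exists_norm_mul_norm_le_of_isLittleO_rpow hf hgrowth hε
  exact ⟨C, .of_forall fun i => lintegral_enorm_comp_mul_enorm_le hC (hv i)⟩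

end Limits

/-- if `f(u) = o(|u|^{p*-1})` as `|u| → ∞`, `Ω` has finite measure,
`(vₙ)` is bounded in `L^{p*}(Ω)` and `vₙ → 0` in `L¹(Ω)`, then `∫_Ω f(vₙ) vₙ → 0`. -/
theorem perturbation_term_vanishes (N : ℕ) (hN : 3 ≤ N) (p ps : ℝ) (hp1 : 1 < p) (hpN : p < N)
    (hps : ps = N * p / (N - p))
    (Ω : Set (EuclideanSpace ℝ (Fin N))) (hΩ : MeasurableSet Ω) (hΩfin : volume Ω < ⊤)
    (f : ℝ → ℝ) (hf : Continuous f)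
    (hgrowth : Tendsto (fun u : ℝ => f u / |u| ^ (ps - 1)) (cocompact ℝ) (nhds 0))
    (v : ℕ → EuclideanSpace ℝ (Fin N) → ℝ) (hmeas : ∀ n, Measurable (v n))
    (hbound : ∃ M : ℝ, ∀ n, (∫⁻ x in Ω, ENNReal.ofReal (|v n x| ^ ps)) ≤ ENNReal.ofReal M)
    (hL1 : Tendsto (fun n => ∫⁻ x in Ω, ENNReal.ofReal |v n x|) atTop (nhds 0)) :
    Tendsto (fun n => ∫ x in Ω, f (v n x) * v n x) atTop (nhds 0) := by
  obtain ⟨M, hM⟩ := hbound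
  refine tendsto_integral_zero_of_tendsto_lintegral_enorm ?_
  simp only [enorm_mul]
  exact perturbation_term_vanishes_general hf (isLittleO_norm_rpow_cocompact_iff.2 hgrowth)
    (fun n => (hmeas n).enorm.aemeasurable) ENNReal.ofReal_ne_top (.of_forall hM)
    (by simpa only [Real.enorm_eq_ofReal_abs] using hL1)
end

section
/- Let N ≥ 3, 1 < p < N, p* = Np/(N−p), and let Ω ⊂ ℝᴺ be a nonempty bounded open set. Let α > 0, β > 0 satisfy α + β + 2 = p*. Define the best Sobolev constant S_p := inf { (∫_Ω |∇u|^p dx) / (∫_Ω |u|^{p*} dx)^{p/p*} : u ∈ C_c^∞(Ω), u ≢ 0 }. Then the infimum, over all pairs (u,v) of smooth compactly supported functions on Ω with ∫_Ω |u|^{α+1}|v|^{β+1} dx > 0, of the quantity (p/(N−p)) · [ (∫_Ω |∇u|^p dx)^{α+1} (∫_Ω |∇v|^p dx)^{β+1} / (∫_Ω |u|^{α+1}|v|^{β+1} dx)^p ]^{1/(p*−p)} equals (p/(N−p)) · S_p^{N/p}. -/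
/-!
Let `A`, `B` be the `p`-Dirichlet integrals of `u`, `v`, let `I = ∫ |u|^a |v|^b` and `s = a + b`,
and let `S` be the infimum of the Sobolev quotients `A / ‖u‖ₛ^p`. Hölder's inequality with the
conjugate exponents `s / a` and `s / b` bounds `I` by `‖u‖ₛ^a ‖v‖ₛ^b`, so `A^a B^b / I^p` is at
least the product of the Sobolev quotients of `u` and `v` raised to the powers `a` and `b`, hence at
least `S^s`. The diagonal pairs `u = v`, for which Hölder is an equality, show that this bound is
the infimum. At the critical exponent `s = N p / (N - p)` the Nehari constants become
`s / p - 1 = p / (N - p)` and `s / (s - p) = N / p`.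
-/

open MeasureTheory
open TopologicalSpace (Opens)
open scoped Distributions

section Infima

lemma isGLB_image_const_mul_rpow {T : Set ℝ} {σ K r : ℝ} (hT : ∀ t ∈ T, 0 ≤ t) (hK : 0 ≤ K)
    (hr : 0 ≤ r) (hσ : IsGLB T σ) : IsGLB ((fun t ↦ K * t ^ r) '' T) (K * σ ^ r) := by
  have hmono : MonotoneOn (fun t : ℝ ↦ K * t ^ r) T := fun t ht _ _ htt' ↦
    mul_le_mul_of_nonneg_left (Real.rpow_le_rpow (hT t ht) htt' hr) hK
  have hcont : Continuous fun t : ℝ ↦ K * t ^ r :=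
    continuous_const.mul (Real.continuous_rpow_const hr)
  exact hσ.isGLB_of_tendsto hmono hσ.nonempty hcont.continuousWithinAt

lemma div_rpow_mul_div_rpow_le {A B U V I a b p s : ℝ} (hA : 0 ≤ A) (hB : 0 ≤ B) (hU : 0 ≤ U)
    (hV : 0 ≤ V) (hI : 0 < I) (hp : 0 ≤ p) (hIUV : I ≤ U ^ (a / s) * V ^ (b / s)) :
    (A / U ^ (p / s)) ^ a * (B / V ^ (p / s)) ^ b ≤ A ^ a * B ^ b / I ^ p := by
  have hIp : I ^ p ≤ (U ^ (p / s)) ^ a * (V ^ (p / s)) ^ b := calc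
    I ^ p ≤ (U ^ (a / s) * V ^ (b / s)) ^ p := Real.rpow_le_rpow hI.le hIUV hp
    _ = (U ^ (p / s)) ^ a * (V ^ (p / s)) ^ b := by
      rw [Real.mul_rpow (by positivity) (by positivity), ← Real.rpow_mul hU, ← Real.rpow_mul hV,
        ← Real.rpow_mul hU, ← Real.rpow_mul hV]
      congr 2 <;> ring
  calc (A / U ^ (p / s)) ^ a * (B / V ^ (p / s)) ^ b
      = A ^ a * B ^ b / ((U ^ (p / s)) ^ a * (V ^ (p / s)) ^ b) := by
        rw [Real.div_rpow hA (by positivity), Real.div_rpow hB (by positivity), div_mul_div_comm]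
    _ ≤ A ^ a * B ^ b / I ^ p := by gcongr

lemma rpow_mul_rpow_div_rpow_self {A U a b p : ℝ} (hA : 0 ≤ A) (hU : 0 ≤ U) (ha : 0 < a)
    (hb : 0 < b) : A ^ a * A ^ b / U ^ p = (A / U ^ (p / (a + b))) ^ (a + b) := by
  rw [Real.div_rpow hA (by positivity), ← Real.rpow_mul hU, div_mul_cancel₀ p (by positivity),
    Real.rpow_add_of_nonneg hA ha.le hb.le]

theorem isGLB_coupled_quotient {X : Type*} {A U : X → ℝ} {I : X → X → ℝ} {a b p σ : ℝ}
    (ha : 0 < a) (hb : 0 < b) (hp : 0 ≤ p) (hA : ∀ x, 0 ≤ A x) (hU : ∀ x, 0 ≤ U x)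
    (hdiag : ∀ x, I x x = U x)
    (hHolder : ∀ x y, I x y ≤ U x ^ (a / (a + b)) * U y ^ (b / (a + b)))
    (hσ : IsGLB {c | ∃ x, 0 < U x ∧ c = A x / U x ^ (p / (a + b))} σ) :
    IsGLB {c | ∃ x y, 0 < I x y ∧ c = A x ^ a * A y ^ b / I x y ^ p} (σ ^ (a + b)) := by
  set S := {c | ∃ x, 0 < U x ∧ c = A x / U x ^ (p / (a + b))}
  have hS : ∀ c ∈ S, 0 ≤ c := by
    rintro _ ⟨x, -, rfl⟩
    exact div_nonneg (hA x) (Real.rpow_nonneg (hU x) _)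
  have hσ0 : 0 ≤ σ := hσ.2 hS
  constructor
  · rintro _ ⟨x, y, hI, rfl⟩
    have hUx : U x ≠ 0 := fun h ↦ hI.not_ge <| by
      simpa [h, Real.zero_rpow (div_pos ha (add_pos ha hb)).ne'] using hHolder x y
    have hUy : U y ≠ 0 := fun h ↦ hI.not_ge <| by
      simpa [h, Real.zero_rpow (div_pos hb (add_pos ha hb)).ne'] using hHolder x y
    have hx : σ ≤ A x / U x ^ (p / (a + b)) := hσ.1 ⟨x, (hU x).lt_of_ne' hUx, rfl⟩
    have hy : σ ≤ A y / U y ^ (p / (a + b)) := hσ.1 ⟨y, (hU y).lt_of_ne' hUy, rfl⟩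
    calc σ ^ (a + b) = σ ^ a * σ ^ b := Real.rpow_add_of_nonneg hσ0 ha.le hb.le
      _ ≤ (A x / U x ^ (p / (a + b))) ^ a * (A y / U y ^ (p / (a + b))) ^ b :=
        mul_le_mul (Real.rpow_le_rpow hσ0 hx ha.le) (Real.rpow_le_rpow hσ0 hy hb.le)
          (Real.rpow_nonneg hσ0 b) (Real.rpow_nonneg (hσ0.trans hx) a)
      _ ≤ A x ^ a * A y ^ b / I x y ^ p :=
        div_rpow_mul_div_rpow_le (hA x) (hA y) (hU x) (hU y) hI hp (hHolder x y)
  · intro m hm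
    have hpow : IsGLB ((· ^ (a + b)) '' S) (σ ^ (a + b)) := by
      simpa only [one_mul] using
        isGLB_image_const_mul_rpow hS zero_le_one (add_pos ha hb).le hσ
    refine hpow.2 ?_
    rintro _ ⟨_, ⟨x, hx, rfl⟩, rfl⟩
    refine hm ⟨x, x, hdiag x ▸ hx, ?_⟩
    rw [hdiag, rpow_mul_rpow_div_rpow_self (hA x) (hU x) ha hb]

lemma isGLB_const_mul_coupled_quotient_rpow {X : Type*} {A U : X → ℝ} {I : X → X → ℝ}
    {a b p K r σ : ℝ} (ha : 0 < a) (hb : 0 < b) (hp : 0 ≤ p) (hK : 0 ≤ K) (hr : 0 ≤ r)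
    (hA : ∀ x, 0 ≤ A x) (hU : ∀ x, 0 ≤ U x) (hdiag : ∀ x, I x x = U x)
    (hHolder : ∀ x y, I x y ≤ U x ^ (a / (a + b)) * U y ^ (b / (a + b)))
    (hσ : IsGLB {c | ∃ x, 0 < U x ∧ c = A x / U x ^ (p / (a + b))} σ) :
    IsGLB {c | ∃ x y, 0 < I x y ∧ c = K * (A x ^ a * A y ^ b / I x y ^ p) ^ r}
      (K * σ ^ ((a + b) * r)) := by
  have hσ0 : 0 ≤ σ := hσ.2 <| by
    rintro _ ⟨x, -, rfl⟩
    exact div_nonneg (hA x) (Real.rpow_nonneg (hU x) _)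
  have hT := isGLB_coupled_quotient ha hb hp hA hU hdiag hHolder hσ
  have hlevels := isGLB_image_const_mul_rpow
    (fun t ht ↦ (Real.rpow_nonneg hσ0 (a + b)).trans (hT.1 ht)) hK hr hT
  rw [Real.rpow_mul hσ0]
  convert hlevels using 1
  ext c
  constructor
  · rintro ⟨x, y, hI, rfl⟩
    exact ⟨_, ⟨x, y, hI, rfl⟩, rfl⟩
  · rintro ⟨_, ⟨x, y, hI, rfl⟩, rfl⟩
    exact ⟨x, y, hI, rfl⟩

end Infima

section Integrals

lemma integral_norm_rpow_mul_norm_rpow_le {X F G : Type*} [MeasurableSpace X]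
    [NormedAddCommGroup F] [NormedAddCommGroup G] {μ : Measure X} {a b : ℝ} (ha : 0 < a)
    (hb : 0 < b) {f : X → F} {g : X → G} (hf : MemLp f (ENNReal.ofReal (a + b)) μ)
    (hg : MemLp g (ENNReal.ofReal (a + b)) μ) :
    ∫ x, ‖f x‖ ^ a * ‖g x‖ ^ b ∂μ ≤
      (∫ x, ‖f x‖ ^ (a + b) ∂μ) ^ (a / (a + b)) * (∫ x, ‖g x‖ ^ (a + b) ∂μ) ^ (b / (a + b)) := by
  have hconj : ((a + b) / a).HolderConjugate ((a + b) / b) := by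
    rw [Real.holderConjugate_iff]
    exact ⟨by rw [lt_div_iff₀ ha]; linarith, by field_simp⟩
  have hfa : MemLp (fun x ↦ ‖f x‖ ^ a) (ENNReal.ofReal ((a + b) / a)) μ := by
    simpa only [ENNReal.ofReal_div_of_pos ha, ENNReal.toReal_ofReal ha.le] using
      hf.norm_rpow_div (ENNReal.ofReal a)
  have hgb : MemLp (fun x ↦ ‖g x‖ ^ b) (ENNReal.ofReal ((a + b) / b)) μ := by
    simpa only [ENNReal.ofReal_div_of_pos hb, ENNReal.toReal_ofReal hb.le] using
      hg.norm_rpow_div (ENNReal.ofReal b)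
  have hHolder := integral_mul_le_Lp_mul_Lq_of_nonneg hconj (.of_forall fun x ↦ by positivity)
    (.of_forall fun x ↦ by positivity) hfa hgb
  simpa only [← Real.rpow_mul (norm_nonneg _), mul_div_cancel₀ _ ha.ne', mul_div_cancel₀ _ hb.ne',
    one_div_div] using hHolder

variable {E : Type*} [NormedAddCommGroup E] [NormedSpace ℝ E] [MeasurableSpace E] {Ω : Opens E}
  (μ : Measure E)

/-- The `p`-Dirichlet integral `∫_Ω |∇u|^p` of a test function `u`; the length of the gradient is
the operator norm of the derivative. -/
noncomputable def dirichletIntegral (p : ℝ) (u : 𝓓(Ω, ℝ)) : ℝ :=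
  ∫ x in Ω, ‖fderiv ℝ u x‖ ^ p ∂μ

/-- The coupling term `∫_Ω |u|^a |v|^b` of the system functional. -/
noncomputable def couplingIntegral (a b : ℝ) (u v : 𝓓(Ω, ℝ)) : ℝ :=
  ∫ x in Ω, |u x| ^ a * |v x| ^ b ∂μ

/-- The Sobolev quotient `∫_Ω |∇u|^p / ‖u‖ₛ^p`, whose infimum is the best constant in the embedding
of `W₀^{1,p}(Ω)` into `L^s(Ω)`. -/
noncomputable def sobolevQuotient (p s : ℝ) (u : 𝓓(Ω, ℝ)) : ℝ :=
  dirichletIntegral μ p u / (∫ x in Ω, |u x| ^ s ∂μ) ^ (p / s)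

variable (Ω) in
/-- The best constant `S` in the Sobolev inequality `S ‖u‖ₛ^p ≤ ∫_Ω |∇u|^p` for test functions. -/
noncomputable def sobolevConstant (p s : ℝ) : ℝ :=
  sInf {c | ∃ u : 𝓓(Ω, ℝ), u ≠ 0 ∧ c = sobolevQuotient μ p s u}

/-- The value of the functional `(a/p) ∫_Ω |∇u|^p + (b/p) ∫_Ω |∇v|^p - ∫_Ω |u|^a |v|^b` at the
point of its Nehari manifold reached from `(u, v)` by scaling the two components separately. -/
noncomputable def nehariLevel (p a b : ℝ) (u v : 𝓓(Ω, ℝ)) : ℝ :=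
  ((a + b) / p - 1) * (dirichletIntegral μ p u ^ a * dirichletIntegral μ p v ^ b /
    couplingIntegral μ a b u v ^ p) ^ (1 / (a + b - p))

lemma dirichletIntegral_nonneg (p : ℝ) (u : 𝓓(Ω, ℝ)) : 0 ≤ dirichletIntegral μ p u :=
  integral_nonneg fun _ ↦ by positivity

lemma couplingIntegral_self {a b : ℝ} (ha : 0 ≤ a) (hb : 0 ≤ b) (u : 𝓓(Ω, ℝ)) :
    couplingIntegral μ a b u u = ∫ x in Ω, |u x| ^ (a + b) ∂μ := by
  simp only [couplingIntegral, Real.rpow_add_of_nonneg (abs_nonneg _) ha hb]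

variable [BorelSpace E] [IsFiniteMeasureOnCompacts μ]

lemma couplingIntegral_le {a b : ℝ} (ha : 0 < a) (hb : 0 < b) (u v : 𝓓(Ω, ℝ)) :
    couplingIntegral μ a b u v ≤ (∫ x in Ω, |u x| ^ (a + b) ∂μ) ^ (a / (a + b)) *
      (∫ x in Ω, |v x| ^ (a + b) ∂μ) ^ (b / (a + b)) :=
  integral_norm_rpow_mul_norm_rpow_le ha hb
    (u.continuous.memLp_of_hasCompactSupport u.hasCompactSupport)
    (v.continuous.memLp_of_hasCompactSupport v.hasCompactSupport)

lemma integral_abs_rpow_pos_iff [μ.IsOpenPosMeasure] {s : ℝ} (hs : 0 < s) {u : 𝓓(Ω, ℝ)} :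
    0 < ∫ x in Ω, |u x| ^ s ∂μ ↔ u ≠ 0 := by
  constructor
  · rintro h rfl
    simp [Real.zero_rpow hs.ne'] at h
  · intro hu
    obtain ⟨x, hx⟩ := DFunLike.ne_iff.mp hu
    have hvanish : ∀ y ∉ (Ω : Set E), |u y| ^ s = 0 := fun y hy ↦ by
      rw [image_eq_zero_of_notMem_tsupport fun h ↦ hy (u.tsupport_subset h), abs_zero,
        Real.zero_rpow hs.ne']
    rw [setIntegral_eq_integral_of_forall_compl_eq_zero hvanish]
    exact Continuous.integral_pos_of_hasCompactSupport_nonneg_nonzero (x := x)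
      (u.continuous.abs.rpow_const fun _ ↦ .inr hs.le)
      (u.hasCompactSupport.comp_left (g := fun t : ℝ ↦ |t| ^ s) (by simp [Real.zero_rpow hs.ne']))
      (fun _ ↦ by positivity) (Real.rpow_pos_of_pos (abs_pos.mpr hx) s).ne'

end Integrals

section TestFunctions

variable {E : Type*} [NormedAddCommGroup E] [NormedSpace ℝ E] {Ω : Opens E}

lemma exists_testFunction_iff {P : (E → ℝ) → Prop} :
    (∃ u : 𝓓(Ω, ℝ), P u) ↔ ∃ u : E → ℝ,
      ContDiff ℝ (⊤ : ℕ∞) u ∧ HasCompactSupport u ∧ tsupport u ⊆ Ω ∧ P u :=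
  ⟨fun ⟨u, hu⟩ ↦ ⟨u, u.contDiff, u.hasCompactSupport, u.tsupport_subset, hu⟩,
    fun ⟨u, hsmooth, hcompact, hsupp, hu⟩ ↦ ⟨⟨u, hsmooth, hcompact, hsupp⟩, hu⟩⟩

lemma testFunction_coe_ne_zero {u : 𝓓(Ω, ℝ)} : (u : E → ℝ) ≠ 0 ↔ u ≠ 0 :=
  DFunLike.coe_injective.ne_iff' FunLike.coe_zero

lemma exists_testFunction_ne_zero [FiniteDimensional ℝ E] (hΩ : (Ω : Set E).Nonempty) :
    ∃ u : 𝓓(Ω, ℝ), u ≠ 0 := by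
  obtain ⟨x, hx⟩ := hΩ
  obtain ⟨u, hsupp, hcompact, hsmooth, -, hux⟩ :=
    exists_contDiff_tsupport_subset (n := ⊤) (Ω.isOpen.mem_nhds hx)
  refine ⟨⟨u, hsmooth, hcompact, hsupp⟩, testFunction_coe_ne_zero.mp fun hu ↦ ?_⟩
  exact one_ne_zero (hux.symm.trans (congrFun hu x))

lemma isGLB_sobolevConstant [FiniteDimensional ℝ E] [MeasurableSpace E] (μ : Measure E)
    (hΩ : (Ω : Set E).Nonempty) (p s : ℝ) :
    IsGLB {c | ∃ u : 𝓓(Ω, ℝ), u ≠ 0 ∧ c = sobolevQuotient μ p s u} (sobolevConstant Ω μ p s) := by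
  obtain ⟨u, hu⟩ := exists_testFunction_ne_zero hΩ
  refine isGLB_csInf ⟨_, u, hu, rfl⟩ ⟨0, ?_⟩
  rintro _ ⟨v, -, rfl⟩
  exact div_nonneg (dirichletIntegral_nonneg μ p v)
    (Real.rpow_nonneg (integral_nonneg fun _ ↦ by positivity) _)

end TestFunctions

section CriticalExponent

variable {d p : ℝ}

lemma critical_exponent_div_sub_one (hp : p ≠ 0) (hpd : p ≠ d) :
    d * p / (d - p) / p - 1 = p / (d - p) := by
  have : d - p ≠ 0 := sub_ne_zero.mpr hpd.symm
  field_simp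
  ring

lemma critical_exponent_div_sub (hp : p ≠ 0) (hpd : p ≠ d) :
    d * p / (d - p) / (d * p / (d - p) - p) = d / p := by
  have : d - p ≠ 0 := sub_ne_zero.mpr hpd.symm
  have hsub : d * p / (d - p) - p = p * p / (d - p) := by field_simp; ring
  rw [hsub]
  field_simp

lemma lt_critical_exponent (hp : 0 < p) (hpd : p < d) : p < d * p / (d - p) := by
  rw [lt_div_iff₀ (sub_pos.mpr hpd)]
  nlinarith [mul_pos hp hp]

end CriticalExponent

theorem nehari_infimum_system_eq_general {E : Type*} [NormedAddCommGroup E] [NormedSpace ℝ E]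
    [FiniteDimensional ℝ E] [MeasurableSpace E] [BorelSpace E] (μ : Measure E)
    [IsFiniteMeasureOnCompacts μ] [μ.IsOpenPosMeasure] {Ω : Opens E} (hΩ : (Ω : Set E).Nonempty)
    {p a b : ℝ} (hp : 0 < p) (ha : 0 < a) (hb : 0 < b) (hpab : p < a + b) :
    sInf {c | ∃ u v : 𝓓(Ω, ℝ), 0 < couplingIntegral μ a b u v ∧ c = nehariLevel μ p a b u v} =
      ((a + b) / p - 1) * sobolevConstant Ω μ p (a + b) ^ ((a + b) / (a + b - p)) := by
  have hS := isGLB_sobolevConstant μ hΩ p (a + b)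
  simp only [← integral_abs_rpow_pos_iff μ (add_pos ha hb), sobolevQuotient] at hS
  have hlevels := isGLB_const_mul_coupled_quotient_rpow (K := (a + b) / p - 1)
    (r := 1 / (a + b - p)) ha hb hp.le (sub_nonneg.mpr ((one_le_div hp).mpr hpab.le))
    (one_div_pos.mpr (sub_pos.mpr hpab)).le (dirichletIntegral_nonneg μ p)
    (fun u ↦ integral_nonneg fun _ ↦ by positivity) (couplingIntegral_self μ ha.le hb.le)
    (couplingIntegral_le μ ha hb) hS
  rw [mul_one_div] at hlevels
  exact hlevels.csInf_eq hlevels.nonempty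

/-- Proposition, case `p = q`: the infimum of the Nehari level of the
homogeneous system functional over pairs of test functions equals `(p/(N−p)) S_p^{N/p}`,
where `S_p` is the best Sobolev constant of `W^{1,p}_0(Ω) ⊂ L^{p*}(Ω)`. -/
theorem nehari_infimum_system_eq (N : ℕ) (hN : 3 ≤ N) (p ps α β : ℝ)
    (hp1 : 1 < p) (hpN : p < N) (hps : ps = N * p / (N - p))
    (hα : 0 < α) (hβ : 0 < β) (hcrit : α + β + 2 = ps)
    (Ω : Set (EuclideanSpace ℝ (Fin N))) (hΩo : IsOpen Ω) (hΩb : Bornology.IsBounded Ω)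
    (hΩne : Ω.Nonempty)
    (Sp : ℝ)
    (hSp : Sp = sInf {c : ℝ | ∃ u : EuclideanSpace ℝ (Fin N) → ℝ,
      ContDiff ℝ (⊤ : ℕ∞) u ∧ HasCompactSupport u ∧ tsupport u ⊆ Ω ∧ u ≠ 0 ∧
      c = (∫ x in Ω, ‖fderiv ℝ u x‖ ^ p) / (∫ x in Ω, |u x| ^ ps) ^ (p / ps)}) :
    sInf {c : ℝ | ∃ u v : EuclideanSpace ℝ (Fin N) → ℝ,
      ContDiff ℝ (⊤ : ℕ∞) u ∧ HasCompactSupport u ∧ tsupport u ⊆ Ω ∧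
      ContDiff ℝ (⊤ : ℕ∞) v ∧ HasCompactSupport v ∧ tsupport v ⊆ Ω ∧
      0 < (∫ x in Ω, |u x| ^ (α + 1) * |v x| ^ (β + 1)) ∧
      c = (p / (N - p)) * ((∫ x in Ω, ‖fderiv ℝ u x‖ ^ p) ^ (α + 1) *
            (∫ x in Ω, ‖fderiv ℝ v x‖ ^ p) ^ (β + 1) /
            (∫ x in Ω, |u x| ^ (α + 1) * |v x| ^ (β + 1)) ^ p) ^ (1 / (ps - p))}
      = (p / (N - p)) * Sp ^ ((N : ℝ) / p) := by
  have hp : 0 < p := zero_lt_one.trans hp1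
  have hs : α + 1 + (β + 1) = ps := by linarith
  have hpps : p < ps := hps ▸ lt_critical_exponent hp hpN
  have hcoeff : ps / p - 1 = p / (N - p) := hps ▸ critical_exponent_div_sub_one hp.ne' hpN.ne
  have hpower : ps / (ps - p) = N / p := hps ▸ critical_exponent_div_sub hp.ne' hpN.ne
  obtain ⟨Ω, rfl⟩ : ∃ U : Opens _, (U : Set _) = Ω := ⟨⟨Ω, hΩo⟩, rfl⟩
  simpa only [sobolevConstant, sobolevQuotient, nehariLevel, couplingIntegral, dirichletIntegral,
    hs, hcoeff, hpower, hSp, exists_and_left, ← exists_testFunction_iff,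
    testFunction_coe_ne_zero] using
    nehari_infimum_system_eq_general volume hΩne hp (add_pos hα one_pos) (add_pos hβ one_pos)
      (hpps.trans_eq hs.symm)
end

section
/- Let N ≥ 3, 1 < p < N, and for ε > 0 define Φ_ε : ℝᴺ → ℝ by Φ_ε(x) = C_N ε^{(N−p)/p²} (ε + |x|^{p/(p−1)})^{(p−N)/p}, where C_N = (N((N−p)/(p−1))^{p−1})^{(N−p)/p²}. Then x ↦ |∇Φ_ε(x)|^p is integrable on ℝᴺ for every ε > 0, and for every bounded continuous function g : ℝᴺ → ℝ one has ∫_{ℝᴺ} g(x) |∇Φ_ε(x)|^p dx → g(0) · ∫_{ℝᴺ} |∇Φ₁(x)|^p dx as ε → 0⁺. -/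
open Filter MeasureTheory

open Module (finrank)
open scoped Topology

/-!
With `r = ε ^ ((p - 1) / p)`, the function `Φ_ε` is the dilation `r ^ ((p - N) / p) * Φ₁ (r⁻¹ • x)`,
and this dilation replaces the energy density `f = |∇Φ₁| ^ p` by `r ^ (-N) * f (r⁻¹ • x)`. Such
rescalings of an integrable function concentrate at the origin: the substitution `x = r • y` turns
the integral against `g` into `∫ g (r • y) * f y`, which tends to `g 0 * ∫ f` by dominated
convergence. The density `f` is integrable because, with `q = p / (p - 1)`, it is at most a multiple
of `(1 + ‖x‖ ^ q) ^ (1 - N)`, and `q * (N - 1) > N` is equivalent to `p < N`.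
-/

section Dilation

variable {E F : Type*} [NormedAddCommGroup E] [NormedSpace ℝ E] [NormedAddCommGroup F]
  [NormedSpace ℝ F]

/-- The dilation of `f` by `r`, normalized so that, for `r > 0`, it preserves the `p`-energy
`∫ ‖∇f‖ ^ p` and hence acts isometrically on the homogeneous Sobolev space `D^{1,p}`. -/
noncomputable def sobolevDilation (p r : ℝ) (f : E → F) (x : E) : F :=
  r ^ ((p - finrank ℝ E) / p) • f (r⁻¹ • x)

lemma norm_fderiv_sobolevDilation_rpow {p r : ℝ} (hp : p ≠ 0) (hr : 0 < r) (f : E → F) (x : E) :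
    ‖fderiv ℝ (sobolevDilation p r f) x‖ ^ p =
      (r ^ finrank ℝ E)⁻¹ * ‖fderiv ℝ f (r⁻¹ • x)‖ ^ p := by
  have hgrad : ‖fderiv ℝ (sobolevDilation p r f) x‖ =
      r ^ (-(finrank ℝ E : ℝ) / p) * ‖fderiv ℝ f (r⁻¹ • x)‖ := by
    have hsmul : sobolevDilation p r f =
        r ^ ((p - finrank ℝ E) / p) • fun y => f (r⁻¹ • y) := rfl
    rw [hsmul, fderiv_const_smul_field, Pi.smul_apply, fderiv_comp_smul, norm_smul,
      norm_smul, Real.norm_of_nonneg (by positivity), Real.norm_of_nonneg (by positivity),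
      ← mul_assoc, ← Real.rpow_neg_one r, ← Real.rpow_add hr]
    congr 2
    field
  rw [hgrad, Real.mul_rpow (by positivity) (norm_nonneg _), ← Real.rpow_mul hr.le,
    div_mul_cancel₀ _ hp, Real.rpow_neg hr.le, Real.rpow_natCast]

variable [MeasurableSpace E] [BorelSpace E] [FiniteDimensional ℝ E]
  {μ : Measure E} [μ.IsAddHaarMeasure] {f : E → F} {g : E → ℝ} {M : ℝ}

lemma integral_smul_inv_pow_smul_comp_inv_smul (g : E → ℝ) (f : E → F) {r : ℝ} (hr : 0 < r) :
    ∫ x, g x • (r ^ finrank ℝ E)⁻¹ • f (r⁻¹ • x) ∂μ = ∫ y, g (r • y) • f y ∂μ := by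
  have hsubst := Measure.integral_comp_inv_smul_of_nonneg μ (fun y => g (r • y) • f y) hr.le
  simp only [smul_inv_smul₀ hr.ne'] at hsubst
  simp_rw [smul_comm (g _)]
  rw [integral_smul, hsubst, inv_smul_smul₀ (by positivity)]

lemma tendsto_integral_comp_smul_smul_nhds_zero (hf : Integrable f μ)
    (hgm : AEStronglyMeasurable g μ) (hgc : ContinuousAt g 0) (hgb : ∀ᵐ x ∂μ, |g x| ≤ M) :
    Tendsto (fun r : ℝ => ∫ y, g (r • y) • f y ∂μ) (𝓝[≠] 0) (𝓝 (g 0 • ∫ y, f y ∂μ)) := by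
  have hquasi {r : ℝ} (hr : r ≠ 0) := Measure.quasiMeasurePreserving_smul μ hr
  rw [← integral_smul]
  refine tendsto_integral_filter_of_dominated_convergence (fun y => M * ‖f y‖) ?_ ?_
    (hf.norm.const_mul M) (.of_forall fun y => ?_)
  · filter_upwards [self_mem_nhdsWithin] with r hr
    exact (hgm.comp_quasiMeasurePreserving (hquasi hr)).smul hf.aestronglyMeasurable
  · filter_upwards [self_mem_nhdsWithin] with r hr
    filter_upwards [(hquasi hr).ae hgb] with y hy
    rw [norm_smul, Real.norm_eq_abs]
    gcongr
  · have hry : Tendsto (fun r : ℝ => r • y) (𝓝[≠] 0) (𝓝 0) :=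
      (Continuous.tendsto' (by fun_prop) 0 0 (zero_smul ℝ y)).mono_left nhdsWithin_le_nhds
    exact (hgc.tendsto.comp hry).smul_const (f y)

lemma integrable_norm_fderiv_sobolevDilation_rpow {p r : ℝ} (hp : p ≠ 0) (hr : 0 < r)
    (hf : Integrable (fun x => ‖fderiv ℝ f x‖ ^ p) μ) :
    Integrable (fun x => ‖fderiv ℝ (sobolevDilation p r f) x‖ ^ p) μ := by
  simp_rw [norm_fderiv_sobolevDilation_rpow hp hr]
  exact (hf.comp_smul (inv_ne_zero hr.ne')).const_mul _

lemma tendsto_integral_mul_norm_fderiv_sobolevDilation_rpow {p : ℝ} (hp : p ≠ 0)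
    (hf : Integrable (fun x => ‖fderiv ℝ f x‖ ^ p) μ)
    (hgm : AEStronglyMeasurable g μ) (hgc : ContinuousAt g 0) (hgb : ∀ᵐ x ∂μ, |g x| ≤ M) :
    Tendsto (fun r : ℝ => ∫ x, g x * ‖fderiv ℝ (sobolevDilation p r f) x‖ ^ p ∂μ) (𝓝[>] 0)
      (𝓝 (g 0 * ∫ x, ‖fderiv ℝ f x‖ ^ p ∂μ)) := by
  refine ((tendsto_integral_comp_smul_smul_nhds_zero hf hgm hgc hgb).mono_left
    (nhdsGT_le_nhdsNE 0)).congr' ?_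
  filter_upwards [self_mem_nhdsWithin] with r hr
  simp_rw [norm_fderiv_sobolevDilation_rpow hp hr]
  exact (integral_smul_inv_pow_smul_comp_inv_smul g _ hr).symm

end Dilation

section Profile

lemma one_add_rpow_le_two_rpow_mul {q t : ℝ} (hq : 0 ≤ q) (ht : 0 ≤ t) :
    (1 + t) ^ q ≤ 2 ^ q * (1 + t ^ q) := by
  have htq : 0 ≤ t ^ q := by positivity
  have htwo : (0 : ℝ) ≤ 2 ^ q := by positivity
  rcases le_total t 1 with ht1 | ht1
  · calc (1 + t) ^ q ≤ 2 ^ q := by gcongr; linarith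
      _ ≤ 2 ^ q * (1 + t ^ q) := le_mul_of_one_le_right htwo (by linarith)
  · calc (1 + t) ^ q ≤ (2 * t) ^ q := by gcongr; linarith
      _ = 2 ^ q * t ^ q := Real.mul_rpow zero_le_two ht
      _ ≤ 2 ^ q * (1 + t ^ q) := by gcongr; linarith

lemma rpow_sub_one_le_one_add_rpow {q t : ℝ} (hq : 1 ≤ q) (ht : 0 ≤ t) :
    t ^ (q - 1) ≤ (1 + t ^ q) ^ (1 - 1 / q) := by
  have hq0 : 0 < q := by linarith
  have hexp : 0 ≤ 1 - 1 / q := sub_nonneg.2 ((div_le_one hq0).2 hq)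
  calc t ^ (q - 1) = (t ^ q) ^ (1 - 1 / q) := by
        rw [← Real.rpow_mul ht, mul_sub, mul_one, mul_one_div_cancel hq0.ne']
    _ ≤ (1 + t ^ q) ^ (1 - 1 / q) := by gcongr; linarith

lemma integrable_one_add_norm_rpow_rpow_neg {E : Type*} [NormedAddCommGroup E] [NormedSpace ℝ E]
    [MeasurableSpace E] [BorelSpace E] [FiniteDimensional ℝ E] {μ : Measure E}
    [μ.IsAddHaarMeasure] {q b : ℝ} (hq : 0 < q) (hb : finrank ℝ E < q * b) :
    Integrable (fun x : E => (1 + ‖x‖ ^ q) ^ (-b)) μ := by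
  have hb0 : 0 < b := pos_of_mul_pos_right ((Nat.cast_nonneg _).trans_lt hb) hq.le
  refine ((integrable_one_add_norm hb).const_mul (2 ^ (q * b))).mono'
    (Measurable.aestronglyMeasurable (by fun_prop)) (.of_forall fun x => ?_)
  have hlower : 2 ^ (-q) * (1 + ‖x‖) ^ q ≤ 1 + ‖x‖ ^ q := by
    rw [Real.rpow_neg zero_le_two, inv_mul_le_iff₀ (by positivity)]
    exact one_add_rpow_le_two_rpow_mul hq.le (norm_nonneg x)
  calc ‖(1 + ‖x‖ ^ q) ^ (-b)‖ = (1 + ‖x‖ ^ q) ^ (-b) := Real.norm_of_nonneg (by positivity)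
    _ ≤ (2 ^ (-q) * (1 + ‖x‖) ^ q) ^ (-b) :=
        Real.rpow_le_rpow_of_nonpos (by positivity) hlower (by linarith)
    _ = 2 ^ (q * b) * (1 + ‖x‖) ^ (-(q * b)) := by
        rw [Real.mul_rpow (by positivity) (by positivity), ← Real.rpow_mul zero_le_two,
          ← Real.rpow_mul (by positivity), neg_mul_neg, mul_neg]

variable {E : Type*} [NormedAddCommGroup E] [InnerProductSpace ℝ E]

lemma norm_fderiv_one_add_norm_rpow_rpow {q : ℝ} (hq : 1 < q) (a : ℝ) (x : E) :
    ‖fderiv ℝ (fun x : E => (1 + ‖x‖ ^ q) ^ a) x‖ =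
      |a| * (1 + ‖x‖ ^ q) ^ (a - 1) * (q * ‖x‖ ^ (q - 1)) := by
  have hpos : 0 < 1 + ‖x‖ ^ q := by positivity
  have hderiv := ((differentiable_norm_rpow hq x).hasFDerivAt.const_add 1).rpow_const
    (p := a) (.inl hpos.ne')
  rw [hderiv.fderiv, norm_smul, norm_fderiv_norm_id_rpow x hq, norm_mul, Real.norm_eq_abs,
    Real.norm_of_nonneg (by positivity)]

lemma norm_fderiv_one_add_norm_rpow_rpow_le {q : ℝ} (hq : 1 < q) (a : ℝ) (x : E) :
    ‖fderiv ℝ (fun x : E => (1 + ‖x‖ ^ q) ^ a) x‖ ≤ |a| * q * (1 + ‖x‖ ^ q) ^ (a - 1 / q) := by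
  have hpos : 0 < 1 + ‖x‖ ^ q := by positivity
  calc ‖fderiv ℝ (fun x : E => (1 + ‖x‖ ^ q) ^ a) x‖
      = |a| * q * ((1 + ‖x‖ ^ q) ^ (a - 1) * ‖x‖ ^ (q - 1)) := by
        rw [norm_fderiv_one_add_norm_rpow_rpow hq]
        ring
    _ ≤ |a| * q * ((1 + ‖x‖ ^ q) ^ (a - 1) * (1 + ‖x‖ ^ q) ^ (1 - 1 / q)) := by
        gcongr
        exact rpow_sub_one_le_one_add_rpow hq.le (norm_nonneg x)
    _ = |a| * q * (1 + ‖x‖ ^ q) ^ (a - 1 / q) := by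
        rw [← Real.rpow_add hpos, sub_add_sub_cancel]

lemma integrable_norm_fderiv_one_add_norm_rpow_rpow [MeasurableSpace E] [BorelSpace E]
    [FiniteDimensional ℝ E] {μ : Measure E} [μ.IsAddHaarMeasure] {p q a : ℝ} (hp : 0 ≤ p)
    (hq : 1 < q) (hdim : finrank ℝ E < p * (1 - q * a)) :
    Integrable (fun x => ‖fderiv ℝ (fun x : E => (1 + ‖x‖ ^ q) ^ a) x‖ ^ p) μ := by
  have hdecay : finrank ℝ E < q * (p * (1 / q - a)) := by
    convert hdim using 1
    field
  refine ((integrable_one_add_norm_rpow_rpow_neg (by linarith) hdecay).const_mul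
    ((|a| * q) ^ p)).mono' (by fun_prop) (.of_forall fun x => ?_)
  calc ‖‖fderiv ℝ (fun x : E => (1 + ‖x‖ ^ q) ^ a) x‖ ^ p‖
      = ‖fderiv ℝ (fun x : E => (1 + ‖x‖ ^ q) ^ a) x‖ ^ p := Real.norm_of_nonneg (by positivity)
    _ ≤ (|a| * q * (1 + ‖x‖ ^ q) ^ (a - 1 / q)) ^ p := by
        gcongr
        exact norm_fderiv_one_add_norm_rpow_rpow_le hq a x
    _ = (|a| * q) ^ p * (1 + ‖x‖ ^ q) ^ (-(p * (1 / q - a))) := by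
        rw [Real.mul_rpow (by positivity) (by positivity), ← Real.rpow_mul (by positivity)]
        congr 2
        ring

end Profile

/-- The Talenti extremal function `Φ_ε` of the Sobolev inequality with exponent `p`, on a normed
space whose `finrank` plays the role of `N`; the constant `C` is left free. -/
noncomputable def talentiBubble {E : Type*} [NormedAddCommGroup E] [NormedSpace ℝ E]
    (p C ε : ℝ) (x : E) : ℝ :=
  C * ε ^ ((finrank ℝ E - p) / p ^ 2) * (ε + ‖x‖ ^ (p / (p - 1))) ^ ((p - finrank ℝ E) / p)

lemma talentiBubble_eq_sobolevDilation {E : Type*} [NormedAddCommGroup E] [NormedSpace ℝ E]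
    {p ε : ℝ} (hp0 : p ≠ 0) (hp1 : p ≠ 1) (hε : 0 < ε) (C : ℝ) :
    (talentiBubble p C ε : E → ℝ) =
      sobolevDilation p (ε ^ ((p - 1) / p)) (talentiBubble p C 1) := by
  set r := ε ^ ((p - 1) / p) with hr
  have hr0 : 0 < r := by positivity
  have hrq : r ^ (p / (p - 1)) = ε := by
    rw [hr, ← inv_div p, Real.rpow_inv_rpow hε.le (div_ne_zero hp0 (sub_ne_zero.2 hp1))]
  funext x
  have hbase : ε + ‖x‖ ^ (p / (p - 1)) = ε * (1 + ‖r⁻¹ • x‖ ^ (p / (p - 1))) := by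
    rw [norm_smul_of_nonneg (by positivity), Real.mul_rpow (by positivity) (norm_nonneg _),
      Real.inv_rpow hr0.le, hrq]
    field
  have hfactor : ε ^ ((finrank ℝ E - p) / p ^ 2) * ε ^ ((p - finrank ℝ E) / p) =
      r ^ ((p - finrank ℝ E) / p) := by
    rw [hr, ← Real.rpow_mul hε.le, ← Real.rpow_add hε]
    congr 1
    field
  simp only [talentiBubble, sobolevDilation, smul_eq_mul]
  rw [hbase, Real.mul_rpow hε.le (by positivity), Real.one_rpow, ← hfactor]
  ring

section Concentration

lemma tendsto_rpow_const_nhdsGT_zero {s : ℝ} (hs : 0 < s) :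
    Tendsto (fun t : ℝ => t ^ s) (𝓝[>] 0) (𝓝[>] 0) := by
  refine tendsto_nhdsWithin_iff.2 ⟨?_, ?_⟩
  · exact ((Real.continuous_rpow_const hs.le).tendsto' 0 0
      (Real.zero_rpow hs.ne')).mono_left nhdsWithin_le_nhds
  · filter_upwards [self_mem_nhdsWithin] with t ht using Real.rpow_pos_of_pos ht s

variable {E : Type*} [NormedAddCommGroup E] [InnerProductSpace ℝ E] [MeasurableSpace E]
  [BorelSpace E] [FiniteDimensional ℝ E] {μ : Measure E} [μ.IsAddHaarMeasure] {p : ℝ}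

lemma integrable_norm_fderiv_talentiBubble_one_rpow (hp1 : 1 < p) (hpN : p < finrank ℝ E)
    (C : ℝ) : Integrable (fun x : E => ‖fderiv ℝ (talentiBubble p C 1) x‖ ^ p) μ := by
  have hp' : 0 < p - 1 := by linarith
  have hq : 1 < p / (p - 1) := (one_lt_div hp').2 (by linarith)
  have hdim : finrank ℝ E < p * (1 - p / (p - 1) * ((p - finrank ℝ E) / p)) := by
    have hrw : p * (1 - p / (p - 1) * ((p - finrank ℝ E) / p)) =
        p * (finrank ℝ E - 1) / (p - 1) := by
      field
    rw [hrw, lt_div_iff₀ hp']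
    linarith
  have hprofile : (talentiBubble p C 1 : E → ℝ) =
      C • fun x => (1 + ‖x‖ ^ (p / (p - 1))) ^ ((p - finrank ℝ E) / p) := by
    funext x
    simp [talentiBubble]
  simp_rw [hprofile, fderiv_const_smul_field, Pi.smul_apply, norm_smul,
    Real.mul_rpow (norm_nonneg C) (norm_nonneg _)]
  exact (integrable_norm_fderiv_one_add_norm_rpow_rpow (by linarith) hq hdim).const_mul _

theorem talenti_concentration_gradient_general (hp1 : 1 < p) (hpN : p < finrank ℝ E) (C : ℝ)
    {g : E → ℝ} {M : ℝ} (hgm : AEStronglyMeasurable g μ) (hgc : ContinuousAt g 0)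
    (hgb : ∀ᵐ x ∂μ, |g x| ≤ M) :
    (∀ ε > (0 : ℝ), Integrable (fun x : E => ‖fderiv ℝ (talentiBubble p C ε) x‖ ^ p) μ) ∧
    Tendsto (fun ε : ℝ => ∫ x, g x * ‖fderiv ℝ (talentiBubble p C ε) x‖ ^ p ∂μ) (𝓝[>] 0)
      (𝓝 (g 0 * ∫ x, ‖fderiv ℝ (talentiBubble p C 1) x‖ ^ p ∂μ)) := by
  have hp0 : 0 < p := by linarith
  have hs : 0 < (p - 1) / p := div_pos (by linarith) hp0
  have hbubble {ε : ℝ} (hε : 0 < ε) :=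
    talentiBubble_eq_sobolevDilation (E := E) hp0.ne' hp1.ne' hε C
  have hf := integrable_norm_fderiv_talentiBubble_one_rpow (μ := μ) hp1 hpN C
  constructor
  · intro ε hε
    rw [hbubble hε]
    exact integrable_norm_fderiv_sobolevDilation_rpow hp0.ne' (by positivity) hf
  · refine ((tendsto_integral_mul_norm_fderiv_sobolevDilation_rpow hp0.ne' hf hgm hgc
      hgb).comp (tendsto_rpow_const_nhdsGT_zero hs)).congr' ?_
    filter_upwards [self_mem_nhdsWithin] with ε hε
    rw [hbubble hε, Function.comp_apply]

end Concentration

/-- the `p`-energy density `|∇Φ_ε|^p` of the Talenti extremal family is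
integrable and converges weakly-* to `(∫ |∇Φ₁|^p) δ₀` as `ε → 0⁺`. -/
theorem talenti_concentration_gradient (N : ℕ) (hN : 3 ≤ N) (p C : ℝ)
    (hp1 : 1 < p) (hpN : p < N)
    (hC : C = ((N : ℝ) * ((N - p) / (p - 1)) ^ (p - 1)) ^ ((N - p) / p ^ 2))
    (Φ : ℝ → EuclideanSpace ℝ (Fin N) → ℝ)
    (hΦ : ∀ ε : ℝ, ∀ x : EuclideanSpace ℝ (Fin N),
      Φ ε x = C * ε ^ ((N - p) / p ^ 2) * (ε + ‖x‖ ^ (p / (p - 1))) ^ ((p - N) / p))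
    (g : EuclideanSpace ℝ (Fin N) → ℝ) (hgc : Continuous g) (hgb : ∃ M : ℝ, ∀ x, |g x| ≤ M) :
    (∀ ε > (0:ℝ), Integrable (fun x => ‖fderiv ℝ (Φ ε) x‖ ^ p) volume) ∧
    Tendsto (fun ε : ℝ => ∫ x, g x * ‖fderiv ℝ (Φ ε) x‖ ^ p) (nhdsWithin 0 (Set.Ioi 0))
      (nhds (g 0 * ∫ x, ‖fderiv ℝ (Φ 1) x‖ ^ p)) := by
  obtain ⟨M, hM⟩ := hgb
  obtain rfl : Φ = talentiBubble p C := by ext; simp [hΦ, talentiBubble]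
  exact talenti_concentration_gradient_general hp1 (by simpa) C hgc.aestronglyMeasurable
    hgc.continuousAt (.of_forall hM)
end

section
/- Let 1 < p < s be real numbers and c ∈ ℝ. Let (aₙ) and (bₙ) be sequences of nonnegative real numbers and (dₙ), (eₙ) real sequences such that: (i) for every ε > 0 there exists C ≥ 0 with |dₙ| ≤ ε bₙ + C and |eₙ| ≤ ε bₙ + C for all n; (ii) aₙ/p − bₙ/s − dₙ → c as n → ∞; and (iii) (aₙ − bₙ − eₙ)/(1 + aₙ^{1/p}) → 0 as n → ∞. Then the sequences (aₙ) and (bₙ) are bounded. -/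
/-!
Up to errors that are small multiples of the sequences themselves, the level condition says
`aₙ ≤ (p / s) bₙ + O(1)` and, since `aₙ ^ (1 / p) ≤ 1 + aₙ`, the derivative condition says
`bₙ ≤ aₙ + O(1)`. Substituting the first into the second bounds `bₙ` because `p / s < 1`, and then
the first bounds `aₙ`.
-/

open Filter
open Asymptotics

section Absorption

variable {ι : Type*} {l : Filter ι} {f f' g g' : ι → ℝ}

/-- Along `l`, the function `f` is bounded above by arbitrarily small multiples of `g`, up to
additive constants: the form in which subcritical terms are dominated. The bound is one-sided, and
the constant may depend on `ε`. -/
def IsAbsorbedBy (l : Filter ι) (f g : ι → ℝ) : Prop :=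
  ∀ ε > 0, ∃ C, ∀ᶠ i in l, f i ≤ ε * g i + C

theorem IsAbsorbedBy.add (h : IsAbsorbedBy l f g) (h' : IsAbsorbedBy l f' g') :
    IsAbsorbedBy l (f + f') (g + g') := by
  intro ε hε
  obtain ⟨C, hC⟩ := h ε hε
  obtain ⟨C', hC'⟩ := h' ε hε
  refine ⟨C + C', ?_⟩
  filter_upwards [hC, hC'] with i hi hi'
  simp only [Pi.add_apply]
  linarith

theorem IsAbsorbedBy.const_smul {c : ℝ} (hc : 0 < c) (h : IsAbsorbedBy l f g) :
    IsAbsorbedBy l (c • f) g := by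
  intro ε hε
  obtain ⟨C, hC⟩ := h (ε / c) (div_pos hε hc)
  refine ⟨c * C, hC.mono fun i hi ↦ ?_⟩
  calc c * f i ≤ c * (ε / c * g i + C) := by gcongr
    _ = ε * g i + c * C := by field_simp

theorem isAbsorbedBy_zero_of_isBoundedUnder (h : l.IsBoundedUnder (· ≤ ·) f) :
    IsAbsorbedBy l f 0 := by
  obtain ⟨C, hC⟩ := h.eventually_le
  exact fun ε _ ↦ ⟨C, by simpa using hC⟩

theorem isAbsorbedBy_of_isLittleO {K : ℝ} (hfg : f =o[l] g) (hg : ∀ᶠ i in l, ‖g i‖ ≤ g' i + K) :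
    IsAbsorbedBy l f g' := by
  intro ε hε
  refine ⟨ε * K, ?_⟩
  filter_upwards [hfg.bound hε, hg] with i hf hg
  calc f i ≤ ε * ‖g i‖ := (Real.le_norm_self _).trans hf
    _ ≤ ε * (g' i + K) := by gcongr
    _ = ε * g' i + ε * K := mul_add ..

end Absorption

section Boundedness

variable {ι : Type*} {l : Filter ι} {a b d e : ι → ℝ}

theorem isBoundedUnder_of_le_affine {α β γ A B : ℝ} (hα : 0 ≤ α) (hβ : 0 ≤ β) (hγ : β * α < γ)
    (ha : ∀ᶠ i in l, a i ≤ α * b i + A) (hb : ∀ᶠ i in l, γ * b i ≤ β * a i + B) :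
    l.IsBoundedUnder (· ≤ ·) a ∧ l.IsBoundedUnder (· ≤ ·) b := by
  have hb_le : ∀ᶠ i in l, b i ≤ (β * A + B) / (γ - β * α) := by
    filter_upwards [ha, hb] with i hai hbi
    have hsubst : γ * b i ≤ β * (α * b i + A) + B := hbi.trans (by gcongr)
    rw [le_div_iff₀ (sub_pos.2 hγ)]
    linarith
  have ha_le : ∀ᶠ i in l, a i ≤ α * ((β * A + B) / (γ - β * α)) + A := by
    filter_upwards [ha, hb_le] with i hai hbi
    exact hai.trans (by gcongr)
  exact ⟨isBoundedUnder_of_eventually_le ha_le, isBoundedUnder_of_eventually_le hb_le⟩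

theorem isBoundedUnder_of_isAbsorbedBy_sub {κ : ℝ} (hκ₀ : 0 ≤ κ) (hκ₁ : κ < 1)
    (hab : IsAbsorbedBy l (a - κ • b) b) (hba : IsAbsorbedBy l (b - a) (a + b)) :
    l.IsBoundedUnder (· ≤ ·) a ∧ l.IsBoundedUnder (· ≤ ·) b := by
  obtain ⟨ε, hε, hsmall⟩ : ∃ ε > 0, (1 + ε) * (κ + ε) < 1 - ε :=
    ⟨(1 - κ) / 4, by linarith, by nlinarith⟩
  obtain ⟨A, hA⟩ := hab ε hε
  obtain ⟨B, hB⟩ := hba ε hε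
  have ha : ∀ᶠ i in l, a i ≤ (κ + ε) * b i + A := by
    filter_upwards [hA] with i hi
    simp only [Pi.sub_apply, Pi.smul_apply, smul_eq_mul] at hi
    linarith
  have hb : ∀ᶠ i in l, (1 - ε) * b i ≤ (1 + ε) * a i + B := by
    filter_upwards [hB] with i hi
    simp only [Pi.sub_apply, Pi.add_apply] at hi
    linarith
  exact isBoundedUnder_of_le_affine (by positivity) (by positivity) hsmall ha hb

theorem isAbsorbedBy_sub_of_level {p s : ℝ} (hp : 0 < p)
    (hlevel : l.IsBoundedUnder (· ≤ ·) fun i ↦ a i / p - b i / s - d i)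
    (hd : IsAbsorbedBy l d b) : IsAbsorbedBy l (a - (p / s) • b) b := by
  have h := ((isAbsorbedBy_zero_of_isBoundedUnder hlevel).add hd).const_smul hp
  convert h using 1
  · ext i
    simp only [Pi.sub_apply, Pi.add_apply, Pi.smul_apply, smul_eq_mul]
    field_simp
    ring
  · exact (zero_add b).symm

theorem palais_smale_bounded_general {p s : ℝ} (hp : 0 < p) (hps : p < s)
    (hd : IsAbsorbedBy l d b) (he : IsAbsorbedBy l (-e) b)
    (hlevel : l.IsBoundedUnder (· ≤ ·) fun i ↦ a i / p - b i / s - d i)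
    (hderiv : IsAbsorbedBy l (-(a - b - e)) a) :
    l.IsBoundedUnder (· ≤ ·) a ∧ l.IsBoundedUnder (· ≤ ·) b := by
  have hs : 0 < s := hp.trans hps
  have hba : IsAbsorbedBy l (b - a) (a + b) := by
    convert hderiv.add he using 1
    abel
  exact isBoundedUnder_of_isAbsorbedBy_sub (div_pos hp hs).le ((div_lt_one hs).2 hps)
    (isAbsorbedBy_sub_of_level hp hlevel hd) hba

end Boundedness

theorem rpow_le_one_add {x q : ℝ} (hx : 0 ≤ x) (hq₀ : 0 ≤ q) (hq₁ : q ≤ 1) : x ^ q ≤ 1 + x :=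
  calc x ^ q ≤ (1 + x) ^ q := by gcongr; linarith
    _ ≤ 1 + q * x := rpow_one_add_le_one_add_mul_self (by linarith) hq₀ hq₁
    _ ≤ 1 + x := by gcongr; exact mul_le_of_le_one_left hx hq₁

theorem isAbsorbedBy_neg_of_tendsto_div_one_add_rpow {ι : Type*} {l : Filter ι} {a r : ι → ℝ}
    {q : ℝ} (ha : ∀ i, 0 ≤ a i) (hq₀ : 0 ≤ q) (hq₁ : q ≤ 1)
    (h : Tendsto (fun i ↦ r i / (1 + a i ^ q)) l (nhds 0)) : IsAbsorbedBy l (-r) a := by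
  have hpos (i : ι) : 0 < 1 + a i ^ q :=
    add_pos_of_pos_of_nonneg one_pos (Real.rpow_nonneg (ha i) q)
  have hr : r =o[l] fun i ↦ 1 + a i ^ q :=
    (isLittleO_iff_tendsto fun i hi ↦ absurd hi (hpos i).ne').2 h
  refine isAbsorbedBy_of_isLittleO (K := 2) hr.neg_left (.of_forall fun i ↦ ?_)
  rw [Real.norm_of_nonneg (hpos i).le]
  linarith [rpow_le_one_add (ha i) hq₀ hq₁]

/-- abstract boundedness of Palais–Smale sequences: if `(aₙ)`, `(bₙ)` are
nonnegative, the perturbation terms `(dₙ)`, `(eₙ)` are controlled by `ε bₙ + C` for every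
`ε > 0`, `aₙ/p − bₙ/s − dₙ → c` and `(aₙ − bₙ − eₙ)/(1 + aₙ^{1/p}) → 0`, then `(aₙ)` and
`(bₙ)` are bounded. -/
theorem palais_smale_bounded (p s c : ℝ) (hp : 1 < p) (hps : p < s)
    (a b d e : ℕ → ℝ) (ha : ∀ n, 0 ≤ a n) (hb : ∀ n, 0 ≤ b n)
    (hde : ∀ ε > (0:ℝ), ∃ C ≥ (0:ℝ), ∀ n, |d n| ≤ ε * b n + C ∧ |e n| ≤ ε * b n + C)
    (hlevel : Tendsto (fun n => a n / p - b n / s - d n) atTop (nhds c))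
    (hderiv : Tendsto (fun n => (a n - b n - e n) / (1 + a n ^ (1 / p))) atTop (nhds 0)) :
    ∃ M : ℝ, ∀ n, a n ≤ M ∧ b n ≤ M := by
  have hp₀ : 0 < p := one_pos.trans hp
  have hd : IsAbsorbedBy atTop d b := fun ε hε ↦
    let ⟨C, _, hC⟩ := hde ε hε
    ⟨C, .of_forall fun n ↦ (le_abs_self _).trans (hC n).1⟩
  have he : IsAbsorbedBy atTop (-e) b := fun ε hε ↦
    let ⟨C, _, hC⟩ := hde ε hε
    ⟨C, .of_forall fun n ↦ (neg_le_abs _).trans (hC n).2⟩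
  have hr : IsAbsorbedBy atTop (-(a - b - e)) a :=
    isAbsorbedBy_neg_of_tendsto_div_one_add_rpow ha (one_div_pos.2 hp₀).le
      ((div_le_one hp₀).2 hp.le) hderiv
  obtain ⟨ha_bdd, hb_bdd⟩ :=
    palais_smale_bounded_general hp₀ hps hd he hlevel.isBoundedUnder_le hr
  obtain ⟨M, hM⟩ := (ha_bdd.sup hb_bdd).bddAbove_range
  exact ⟨M, fun n ↦ sup_le_iff.1 (hM ⟨n, rfl⟩)⟩
end
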